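/- arXiv:2006.08382 — 7 statements merged into one kernel-verified Lean document; each statement's English description precedes it below -/
import Mathlib

section
/- There exists a constant L ≥ 0, depending only on φ, such that for all a, b ∈ ℝ³ one has (f(a) − f(b))·(a − b) ≥ −L |a − b|². (This is the semi-monotonicity property, expressing that the Jacobian of f is bounded below by −L, used in the uniqueness proof for the Brinkman–Forchheimer system.) -/
/-!
Write `g r = φ (r²) r` for the radial profile of `f`. The lower bounds on `φ` and `φ'` give
`g' r = φ (r²) + 2 r² φ' (r²) ≥ -C + 2 K r² - 2 C r ≥ -L` with `L = C + C² / (2K)`, by completing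
the square, so `r ↦ (φ (r²) + L) r` is monotone on `(0, ∞)` (`radial_monotoneOn`).
Since also `φ + L ≥ 0`, the Cauchy–Schwarz inequality reduces the monotonicity of
`u ↦ f u + L u` to that of this radial profile (`inner_smul_sub_smul_nonneg`).
-/

open scoped RealInnerProductSpace

lemma radial_monotoneOn {φ φ' : ℝ → ℝ} {K C : ℝ} (hK : 0 < K)
    (hderiv : ∀ z ∈ Set.Ioi (0:ℝ), HasDerivAt φ (φ' z) z)
    (hφ'lb : ∀ z ∈ Set.Ioi (0:ℝ), K - C * z ^ (-(1:ℝ)/2) ≤ φ' z)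
    (hφ : ∀ z ∈ Set.Ioi (0:ℝ), -C ≤ φ z) :
    MonotoneOn (fun r : ℝ => (φ (r ^ 2) + (C + C ^ 2 / (2 * K))) * r) (Set.Ioi 0) := by
  have hd : ∀ r ∈ Set.Ioi (0:ℝ),
      HasDerivAt (fun r : ℝ => (φ (r ^ 2) + (C + C ^ 2 / (2 * K))) * r)
        (φ' (r ^ 2) * (2 * r) * r + (φ (r ^ 2) + (C + C ^ 2 / (2 * K)))) r := by
    intro r hr
    have hr2 : r ^ 2 ∈ Set.Ioi (0:ℝ) := pow_pos (Set.mem_Ioi.mp hr) 2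
    have hsq : HasDerivAt (fun r : ℝ => r ^ 2) (2 * r) r := by
      simpa using hasDerivAt_pow 2 r
    have hcomp : HasDerivAt (fun r : ℝ => φ (r ^ 2)) (φ' (r ^ 2) * (2 * r)) r :=
      HasDerivAt.comp (h := fun r : ℝ => r ^ 2) r (hderiv _ hr2) hsq
    have hmul := (hcomp.add_const (C + C ^ 2 / (2 * K))).mul (hasDerivAt_id r)
    rw [mul_one] at hmul
    exact hmul
  refine monotoneOn_of_deriv_nonneg (convex_Ioi 0)
    (fun r hr => (hd r hr).continuousAt.continuousWithinAt) ?_ ?_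
  · rw [interior_Ioi]
    exact fun r hr => (hd r hr).differentiableAt.differentiableWithinAt
  · rw [interior_Ioi]
    intro r hr
    rw [(hd r hr).deriv]
    have hr0 : 0 < r := hr
    have hr2 : r ^ 2 ∈ Set.Ioi (0:ℝ) := pow_pos (Set.mem_Ioi.mp hr) 2
    have hpow : (r ^ 2) ^ (-(1:ℝ)/2) = r⁻¹ := by
      rw [← Real.rpow_natCast r 2, ← Real.rpow_mul hr0.le, ← Real.rpow_neg_one]
      norm_num
    have h1 := hφ'lb _ hr2
    rw [hpow] at h1
    have h2 := hφ _ hr2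
    have h3 : 2 * K * r ^ 2 - 2 * C * r ≤ φ' (r ^ 2) * (2 * r) * r := by
      have h := mul_le_mul_of_nonneg_right h1 (by positivity : 0 ≤ 2 * r * r)
      have e : (K - C * r⁻¹) * (2 * r * r) = 2 * K * r ^ 2 - 2 * C * r := by
        field_simp
      linarith
    have h4 : 2 * K * r ^ 2 - 2 * C * r + C ^ 2 / (2 * K) = (2 * K * r - C) ^ 2 / (2 * K) := by
      field_simp
      ring
    have h5 : 0 ≤ (2 * K * r - C) ^ 2 / (2 * K) := by positivity
    linarith

/-- Nonnegative weights `p`, `q` reduce monotonicity of a radial vector field to monotonicity of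
its radial profile, because `⟪a, b⟫ ≤ ‖a‖ ‖b‖`. -/
lemma inner_smul_sub_smul_nonneg {E : Type*} [NormedAddCommGroup E] [InnerProductSpace ℝ E]
    {p q : ℝ} (hp : 0 ≤ p) (hq : 0 ≤ q) (a b : E)
    (h : 0 ≤ (p * ‖a‖ - q * ‖b‖) * (‖a‖ - ‖b‖)) :
    0 ≤ ⟪p • a - q • b, a - b⟫ := by
  have hcs := mul_le_mul_of_nonneg_left (real_inner_le_norm a b) (add_nonneg hp hq)
  simp only [inner_sub_left, inner_sub_right, real_inner_smul_left,
    real_inner_self_eq_norm_sq, real_inner_comm a b]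
  nlinarith

/-- Semi-monotonicity of the Forchheimer nonlinearity `f(u) = φ(|u|²)u`:
there is `L ≥ 0`, depending only on `φ`, with
`(f(a) - f(b))·(a - b) ≥ -L |a - b|²` for all `a, b ∈ ℝ³`. -/
theorem stmt_0
    (l : ℝ) (hl : l ∈ Set.Ioc (0:ℝ) 2)
    (φ φ' : ℝ → ℝ)
    (hderiv : ∀ z ∈ Set.Ioi (0:ℝ), HasDerivAt φ (φ' z) z)
    (hφ'cont : ContinuousOn φ' (Set.Ioi 0))
    (α K C C₁ : ℝ) (hα : 0 < α) (hK : 0 < K) (hC : 0 < C) (hC₁ : 0 < C₁)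
    (hφ'lb : ∀ z ∈ Set.Ioi (0:ℝ), K - C * z ^ (-(1:ℝ)/2) ≤ φ' z)
    (hφ'ub : ∀ z ∈ Set.Ioi (0:ℝ), φ' z ≤ C₁ * z ^ (-(1:ℝ)/2) * (1 + z ^ ((3:ℝ)/2)))
    (hφlb : ∀ z ∈ Set.Ioi (0:ℝ), -C + α * z ^ l ≤ φ z)
    (hφub : ∀ z ∈ Set.Ioi (0:ℝ), φ z ≤ C * (1 + z ^ l))
    (f : EuclideanSpace ℝ (Fin 3) → EuclideanSpace ℝ (Fin 3))
    (hf : ∀ u : EuclideanSpace ℝ (Fin 3), u ≠ 0 → f u = φ (‖u‖ ^ 2) • u)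
    (hf0 : f 0 = 0) :
    ∃ L : ℝ, 0 ≤ L ∧ ∀ a b : EuclideanSpace ℝ (Fin 3),
      ⟪f a - f b, a - b⟫ ≥ -L * ‖a - b‖ ^ 2 := by
  have hφ : ∀ z ∈ Set.Ioi (0:ℝ), -C ≤ φ z := fun z hz => by
    have h0 : 0 ≤ α * z ^ l := mul_nonneg hα.le (Real.rpow_nonneg (le_of_lt hz) l)
    linarith [hφlb z hz]
  have hmono := radial_monotoneOn hK hderiv hφ'lb hφ
  have hLC : C ≤ C + C ^ 2 / (2 * K) := le_add_of_nonneg_right (by positivity)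
  set L : ℝ := C + C ^ 2 / (2 * K) with hL
  have hL0 : 0 ≤ L := hC.le.trans hLC
  -- The weight at the origin is irrelevant, so it may be taken nonnegative there as well;
  -- `φ 0` itself is unconstrained.
  obtain ⟨w, hw0, hwpos⟩ : ∃ w : EuclideanSpace ℝ (Fin 3) → ℝ, w 0 = 0 ∧
      ∀ u, u ≠ 0 → w u = φ (‖u‖ ^ 2) + L := by
    classical
    exact ⟨fun u => if u = 0 then 0 else φ (‖u‖ ^ 2) + L, by simp, fun u hu => by simp [hu]⟩
  have hw : ∀ u, 0 ≤ w u := by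
    intro u
    by_cases hu : u = 0
    · rw [hu, hw0]
    · have hz : ‖u‖ ^ 2 ∈ Set.Ioi (0:ℝ) := pow_pos (norm_pos_iff.mpr hu) 2
      rw [hwpos u hu]
      linarith [hφ _ hz]
  have hfw : ∀ u, f u = w u • u - L • u := by
    intro u
    by_cases hu : u = 0
    · simp [hu, hf0]
    · rw [hf u hu, hwpos u hu, add_smul, add_sub_cancel_right]
  refine ⟨L, hL0, fun a b => ?_⟩
  have hrad : 0 ≤ (w a * ‖a‖ - w b * ‖b‖) * (‖a‖ - ‖b‖) := by
    by_cases ha : a = 0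
    · subst ha
      have h := mul_nonneg (hw b) (sq_nonneg ‖b‖)
      simp only [norm_zero]
      nlinarith
    by_cases hb : b = 0
    · subst hb
      have h := mul_nonneg (hw a) (sq_nonneg ‖a‖)
      simp only [norm_zero]
      nlinarith
    have ha' : ‖a‖ ∈ Set.Ioi (0:ℝ) := norm_pos_iff.mpr ha
    have hb' : ‖b‖ ∈ Set.Ioi (0:ℝ) := norm_pos_iff.mpr hb
    rw [hwpos a ha, hwpos b hb]
    rcases le_total ‖a‖ ‖b‖ with hab | hab
    · exact mul_nonneg_of_nonpos_of_nonpos (sub_nonpos.mpr (hmono ha' hb' hab))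
        (sub_nonpos.mpr hab)
    · exact mul_nonneg (sub_nonneg.mpr (hmono hb' ha' hab)) (sub_nonneg.mpr hab)
  have hmain := inner_smul_sub_smul_nonneg (hw a) (hw b) a b hrad
  have hsplit : f a - f b = (w a • a - w b • b) - L • (a - b) := by
    rw [hfw a, hfw b, smul_sub]
    abel
  rw [hsplit, inner_sub_left, real_inner_smul_left, real_inner_self_eq_norm_sq]
  linarith
end

section
/- There exists a constant C′ > 0, depending only on φ, l and D, such that |f(u)|^{6/5} ≤ C′ ( |f(u)·Du| + 1 ) for all u ∈ ℝ³. (This inequality is the key pointwise step used to control the term (f(u), 𝔅p) in the derivation of the basic dissipative energy estimate.) -/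
/-!
Write `r = ‖u‖` and `P = |φ(r²)|`, so that `‖f u‖ = P r` and, `D` being coercive with some constant
`c > 0`, `|f(u)·Du| ≥ c P r²`. The two-sided bound on `φ` gives `P ≤ 2C` for `r ≤ 1` and, because
`l ≤ 2`, `P ≤ 2C r⁴` for `r ≥ 1`. In the first case `(P r)^{6/5}` is bounded by `(2C)^{6/5}`; in the
second, `(P r)^{6/5} = (P r)^{1/5} · P r ≤ (2C r⁵)^{1/5} · P r = (2C)^{1/5} P r²`.
-/

open scoped RealInnerProductSpace

/-- Coercivity of a positive definite matrix; the constant is the minimum of the quadratic form on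
the unit sphere, attained by compactness. -/
lemma posDef_coercive (D : Matrix (Fin 3) (Fin 3) ℝ) (hD : D.PosDef) :
    ∃ c : ℝ, 0 < c ∧ ∀ u : EuclideanSpace ℝ (Fin 3),
      c * ‖u‖ ^ 2 ≤ ⟪u, Matrix.toEuclideanLin D u⟫ := by
  have hpos : ∀ u : EuclideanSpace ℝ (Fin 3), u ≠ 0 →
      0 < ⟪u, Matrix.toEuclideanLin D u⟫ := by
    intro u hu
    have h := hD.dotProduct_mulVec_pos (x := u.ofLp) (by simpa using hu)
    rw [EuclideanSpace.inner_eq_star_dotProduct, dotProduct_comm]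
    simpa using h
  have hcont : Continuous fun u : EuclideanSpace ℝ (Fin 3) =>
      ⟪u, Matrix.toEuclideanLin D u⟫ :=
    continuous_id.inner (LinearMap.continuous_of_finiteDimensional _)
  obtain ⟨v, hv, hmin⟩ := (isCompact_sphere (0 : EuclideanSpace ℝ (Fin 3)) 1).exists_isMinOn
    (NormedSpace.sphere_nonempty.mpr zero_le_one) hcont.continuousOn
  have hv0 : v ≠ 0 := by
    rintro rfl
    simp at hv
  refine ⟨_, hpos v hv0, fun u => ?_⟩
  by_cases hu : u = 0
  · simp [hu]
  have hr : 0 < ‖u‖ := norm_pos_iff.mpr hu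
  have hw : ‖u‖⁻¹ • u ∈ Metric.sphere (0 : EuclideanSpace ℝ (Fin 3)) 1 := by
    simp [norm_smul, hr.ne']
  have h := isMinOn_iff.mp hmin _ hw
  simp only [map_smul, real_inner_smul_left, real_inner_smul_right] at h
  calc _ ≤ (‖u‖⁻¹ * (‖u‖⁻¹ * ⟪u, Matrix.toEuclideanLin D u⟫)) * ‖u‖ ^ 2 := by gcongr
    _ = _ := by field_simp

/-- The scalar inequality behind the case `r ≥ 1`: as `P r ≤ M r⁵`, one factor `(P r)^{1/5}` is at
most `M^{1/5} r`. -/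
lemma rpow_six_fifths_le {P r M : ℝ} (hP : 0 ≤ P) (hr : 0 ≤ r) (hM : 0 ≤ M)
    (h : P ≤ M * r ^ 4) :
    (P * r) ^ ((6:ℝ)/5) ≤ M ^ ((1:ℝ)/5) * (P * r ^ 2) := by
  have hPr : 0 ≤ P * r := mul_nonneg hP hr
  have hsplit : ∀ x : ℝ, 0 ≤ x → x ^ ((6:ℝ)/5) = x ^ ((1:ℝ)/5) * x := by
    intro x hx
    rw [show (6:ℝ)/5 = 1/5 + 1 by norm_num,
      Real.rpow_add_of_nonneg hx (by norm_num) (by norm_num), Real.rpow_one]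
  have h5 : (r ^ 5) ^ ((1:ℝ)/5) = r := by
    rw [← Real.rpow_natCast, ← Real.rpow_mul hr]
    norm_num
  calc (P * r) ^ ((6:ℝ)/5) = (P * r) ^ ((1:ℝ)/5) * (P * r) := hsplit _ hPr
    _ ≤ (M * r ^ 5) ^ ((1:ℝ)/5) * (P * r) := by
        have h' : P * r ≤ M * r ^ 5 := by
          calc P * r ≤ M * r ^ 4 * r := by gcongr
            _ = M * r ^ 5 := by ring
        exact mul_le_mul_of_nonneg_right (Real.rpow_le_rpow hPr h' (by norm_num)) hPr
    _ = M ^ ((1:ℝ)/5) * (P * r ^ 2) := by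
        rw [Real.mul_rpow hM (by positivity), h5]
        ring

/-- The pointwise inequality `|f(u)|^{6/5} ≤ C'(|f(u)·Du| + 1)` for the Forchheimer
nonlinearity `f(u) = φ(|u|²)u` and a symmetric positive definite matrix `D`. -/
theorem stmt_1
    (l : ℝ) (hl : l ∈ Set.Ioc (0:ℝ) 2)
    (φ φ' : ℝ → ℝ)
    (hderiv : ∀ z ∈ Set.Ioi (0:ℝ), HasDerivAt φ (φ' z) z)
    (hφ'cont : ContinuousOn φ' (Set.Ioi 0))
    (α K C C₁ : ℝ) (hα : 0 < α) (hK : 0 < K) (hC : 0 < C) (hC₁ : 0 < C₁)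
    (hφ'lb : ∀ z ∈ Set.Ioi (0:ℝ), K - C * z ^ (-(1:ℝ)/2) ≤ φ' z)
    (hφ'ub : ∀ z ∈ Set.Ioi (0:ℝ), φ' z ≤ C₁ * z ^ (-(1:ℝ)/2) * (1 + z ^ ((3:ℝ)/2)))
    (hφlb : ∀ z ∈ Set.Ioi (0:ℝ), -C + α * z ^ l ≤ φ z)
    (hφub : ∀ z ∈ Set.Ioi (0:ℝ), φ z ≤ C * (1 + z ^ l))
    (f : EuclideanSpace ℝ (Fin 3) → EuclideanSpace ℝ (Fin 3))
    (hf : ∀ u : EuclideanSpace ℝ (Fin 3), u ≠ 0 → f u = φ (‖u‖ ^ 2) • u)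
    (hf0 : f 0 = 0)
    (D : Matrix (Fin 3) (Fin 3) ℝ) (hDsymm : D.IsSymm) (hDpos : D.PosDef) :
    ∃ C' : ℝ, 0 < C' ∧ ∀ u : EuclideanSpace ℝ (Fin 3),
      ‖f u‖ ^ ((6:ℝ)/5) ≤ C' * (|⟪f u, Matrix.toEuclideanLin D u⟫| + 1) := by
  obtain ⟨c, hc, hcoer⟩ := posDef_coercive D hDpos
  refine ⟨(2 * C) ^ ((1:ℝ)/5) / c + (2 * C) ^ ((6:ℝ)/5), by positivity, fun u => ?_⟩
  by_cases hu : u = 0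
  · subst hu
    rw [hf0, norm_zero, Real.zero_rpow (by norm_num)]
    positivity
  have hr : 0 < ‖u‖ := norm_pos_iff.mpr hu
  have hz : ‖u‖ ^ 2 ∈ Set.Ioi (0:ℝ) := by
    simp only [Set.mem_Ioi]
    positivity
  have hzl : 0 < (‖u‖ ^ 2) ^ l := Real.rpow_pos_of_pos hz l
  have habs : |φ (‖u‖ ^ 2)| ≤ C * (1 + (‖u‖ ^ 2) ^ l) := by
    refine abs_le.mpr ⟨?_, hφub _ hz⟩
    nlinarith [hφlb _ hz, mul_pos hα hzl, mul_pos hC hzl]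
  have hinner : c * (|φ (‖u‖ ^ 2)| * ‖u‖ ^ 2) ≤ |⟪f u, Matrix.toEuclideanLin D u⟫| := by
    rw [hf u hu, real_inner_smul_left, abs_mul]
    calc c * (|φ (‖u‖ ^ 2)| * ‖u‖ ^ 2) = |φ (‖u‖ ^ 2)| * (c * ‖u‖ ^ 2) := by ring
      _ ≤ _ := by
        gcongr
        exact (hcoer u).trans (le_abs_self _)
  have hnorm : ‖f u‖ = |φ (‖u‖ ^ 2)| * ‖u‖ := by
    rw [hf u hu, norm_smul, Real.norm_eq_abs]
  have hI := abs_nonneg ⟪f u, Matrix.toEuclideanLin D u⟫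
  have hA : 0 ≤ (2 * C) ^ ((1:ℝ)/5) / c := by positivity
  have hB : 0 ≤ (2 * C) ^ ((6:ℝ)/5) := by positivity
  rw [hnorm]
  rcases le_total ‖u‖ 1 with h1 | h1
  · have hle : (‖u‖ ^ 2) ^ l ≤ 1 :=
      Real.rpow_le_one (by positivity) (pow_le_one₀ hr.le h1) hl.1.le
    have hP : |φ (‖u‖ ^ 2)| * ‖u‖ ≤ 2 * C := by
      calc |φ (‖u‖ ^ 2)| * ‖u‖ ≤ |φ (‖u‖ ^ 2)| * 1 := by gcongr
        _ ≤ 2 * C := by nlinarith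
    have := Real.rpow_le_rpow (by positivity) hP (by norm_num : (0:ℝ) ≤ 6/5)
    nlinarith [mul_nonneg hA hI, mul_nonneg hB hI]
  · have hle : (‖u‖ ^ 2) ^ l ≤ ‖u‖ ^ 4 := by
      calc (‖u‖ ^ 2) ^ l ≤ (‖u‖ ^ 2) ^ (2:ℝ) :=
            Real.rpow_le_rpow_of_exponent_le (one_le_pow₀ h1) hl.2
        _ = ‖u‖ ^ 4 := by
            rw [Real.rpow_two]
            ring
    have hP : |φ (‖u‖ ^ 2)| ≤ 2 * C * ‖u‖ ^ 4 := by
      nlinarith [one_le_pow₀ h1 (n := 4)]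
    have h2 := rpow_six_fifths_le (abs_nonneg _) hr.le (by positivity) hP
    have h3 : (2 * C) ^ ((1:ℝ)/5) * (|φ (‖u‖ ^ 2)| * ‖u‖ ^ 2) ≤
        (2 * C) ^ ((1:ℝ)/5) / c * |⟪f u, Matrix.toEuclideanLin D u⟫| := by
      calc _ = (2 * C) ^ ((1:ℝ)/5) / c * (c * (|φ (‖u‖ ^ 2)| * ‖u‖ ^ 2)) := by field_simp
        _ ≤ _ := by gcongr
    nlinarith [mul_nonneg hB hI]
end

section
/- There exists a constant C′ > 0, depending only on φ and l, such that |f(a) − f(b)| ≤ C′ (1 + |a|⁴ + |b|⁴) |a − b| for all a, b ∈ ℝ³. (This is the pointwise quartic-growth Lipschitz estimate behind the bound ‖f(u) − f(v)‖_{H^{−1+δ}} ≤ C(1 + ‖u‖_{H¹}⁴ + ‖v‖_{H¹}⁴)‖u − v‖_{L^s} used in the asymptotic regularity argument.) -/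
/-!
Write `g r = φ (r ^ 2)`, so that `f u = g ‖u‖ • u` for `u ≠ 0`. The growth bounds on `φ` give
`|g r| ≤ C (2 + r ^ 4)` (using `l ≤ 2`), and the two bounds on `φ'` give
`|g' r| = 2 r |φ' (r ^ 2)| ≤ 2 (C + C₁) (1 + r ^ 3)`: the factor `r` absorbs the singularity
`z ^ (-1/2)` at the origin. By symmetry assume `‖b‖ ≤ ‖a‖`. Then
`f a - f b = g ‖a‖ • (a - b) + (g ‖a‖ - g ‖b‖) • b`, and the mean value inequality for `g` on
`[‖b‖, ‖a‖]`, together with `‖a‖ - ‖b‖ ≤ ‖a - b‖`, gives the estimate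
(`abs_comp_sq_le` and `abs_comp_sq_sub_le` are the two bounds on `g`).
-/

lemma abs_comp_sq_le {l C α : ℝ} (hl : l ∈ Set.Ioc (0:ℝ) 2) {φ : ℝ → ℝ} (hα : 0 < α) (hC : 0 < C)
    (hφlb : ∀ z ∈ Set.Ioi (0:ℝ), -C + α * z ^ l ≤ φ z)
    (hφub : ∀ z ∈ Set.Ioi (0:ℝ), φ z ≤ C * (1 + z ^ l)) {r : ℝ} (hr : 0 < r) :
    |φ (r ^ 2)| ≤ C * (2 + r ^ 4) := by
  have hz : 0 < r ^ 2 := by positivity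
  have h1 := hφlb _ hz
  have h2 := hφub _ hz
  have h3 : 0 < (r ^ 2) ^ l := Real.rpow_pos_of_pos hz l
  have h4 : (r ^ 2) ^ l ≤ 1 + r ^ 4 := by
    rcases le_total (r ^ 2) 1 with h | h
    · have := Real.rpow_le_one hz.le h hl.1.le
      have : 0 < r ^ 4 := by positivity
      linarith
    · have := Real.rpow_le_rpow_of_exponent_le h hl.2
      rw [Real.rpow_two] at this
      nlinarith
  have h5 : 0 < α * (r ^ 2) ^ l := by positivity
  have h6 : 0 < C * r ^ 4 := by positivity
  have h7 := mul_le_mul_of_nonneg_left h4 hC.le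
  rw [abs_le]
  constructor <;> nlinarith

lemma abs_comp_sq_sub_le {φ φ' : ℝ → ℝ} {K C C₁ : ℝ} (hK : 0 < K) (hC : 0 < C) (hC₁ : 0 < C₁)
    (hderiv : ∀ z ∈ Set.Ioi (0:ℝ), HasDerivAt φ (φ' z) z)
    (hφ'lb : ∀ z ∈ Set.Ioi (0:ℝ), K - C * z ^ (-(1:ℝ)/2) ≤ φ' z)
    (hφ'ub : ∀ z ∈ Set.Ioi (0:ℝ), φ' z ≤ C₁ * z ^ (-(1:ℝ)/2) * (1 + z ^ ((3:ℝ)/2)))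
    {s r : ℝ} (hs : 0 < s) (hsr : s ≤ r) :
    |φ (r ^ 2) - φ (s ^ 2)| ≤ 2 * (C + C₁) * (1 + r ^ 3) * (r - s) := by
  have hd : ∀ t ∈ Set.Icc s r,
      HasDerivWithinAt (fun t => φ (t ^ 2)) (φ' (t ^ 2) * (2 * t)) (Set.Icc s r) t := by
    intro t ht
    have ht0 : 0 < t := hs.trans_le ht.1
    have hz : (0:ℝ) < t ^ 2 := by positivity
    have h1 : HasDerivAt (fun t : ℝ => t ^ 2) (2 * t) t := by
      simpa using hasDerivAt_pow 2 t
    exact (HasDerivAt.comp (h₂ := φ) (h := fun t : ℝ => t ^ 2) t (hderiv _ hz) h1).hasDerivWithinAt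
  have hb : ∀ t ∈ Set.Icc s r, ‖φ' (t ^ 2) * (2 * t)‖ ≤ 2 * (C + C₁) * (1 + r ^ 3) := by
    intro t ht
    have ht0 : 0 < t := hs.trans_le ht.1
    have hz : (0:ℝ) < t ^ 2 := by positivity
    have e1 : (t ^ 2) ^ (-(1:ℝ)/2) = t⁻¹ := by
      rw [← Real.rpow_natCast_mul ht0.le, ← Real.rpow_neg_one]; norm_num
    have e2 : (t ^ 2) ^ ((3:ℝ)/2) = t ^ 3 := by
      rw [← Real.rpow_natCast_mul ht0.le, ← Real.rpow_natCast]; norm_num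
    have h1 := hφ'lb _ hz
    have h2 := hφ'ub _ hz
    rw [e1] at h1 h2
    rw [e2] at h2
    have h3 : t ^ 3 ≤ r ^ 3 := pow_le_pow_left₀ ht0.le ht.2 3
    have h4 : -C ≤ φ' (t ^ 2) * t := by
      have := mul_le_mul_of_nonneg_right h1 ht0.le
      have e : (K - C * t⁻¹) * t = K * t - C := by field_simp
      have : 0 < K * t := by positivity
      linarith
    have h5 : φ' (t ^ 2) * t ≤ C₁ * (1 + t ^ 3) := by
      have := mul_le_mul_of_nonneg_right h2 ht0.le
      have e : C₁ * t⁻¹ * (1 + t ^ 3) * t = C₁ * (1 + t ^ 3) := by field_simp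
      linarith
    have h6 : 0 < t ^ 3 := by positivity
    have h7 := mul_le_mul_of_nonneg_left h3 hC₁.le
    have h8 : 0 < C * r ^ 3 := mul_pos hC (h6.trans_le h3)
    have h9 : 0 < C₁ * r ^ 3 := mul_pos hC₁ (h6.trans_le h3)
    rw [Real.norm_eq_abs, abs_le]
    constructor <;> nlinarith
  have h := (convex_Icc s r).norm_image_sub_le_of_norm_hasDerivWithin_le hd hb
    (Set.left_mem_Icc.2 hsr) (Set.right_mem_Icc.2 hsr)
  simpa [Real.norm_eq_abs, abs_of_nonneg (sub_nonneg.2 hsr)] using h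


open scoped RealInnerProductSpace

/-- Pointwise quartic-growth Lipschitz estimate:
`|f(a) - f(b)| ≤ C'(1 + |a|⁴ + |b|⁴)|a - b|` for all `a, b ∈ ℝ³`. -/
theorem stmt_4
    (l : ℝ) (hl : l ∈ Set.Ioc (0:ℝ) 2)
    (φ φ' : ℝ → ℝ)
    (hderiv : ∀ z ∈ Set.Ioi (0:ℝ), HasDerivAt φ (φ' z) z)
    (hφ'cont : ContinuousOn φ' (Set.Ioi 0))
    (α K C C₁ : ℝ) (hα : 0 < α) (hK : 0 < K) (hC : 0 < C) (hC₁ : 0 < C₁)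
    (hφ'lb : ∀ z ∈ Set.Ioi (0:ℝ), K - C * z ^ (-(1:ℝ)/2) ≤ φ' z)
    (hφ'ub : ∀ z ∈ Set.Ioi (0:ℝ), φ' z ≤ C₁ * z ^ (-(1:ℝ)/2) * (1 + z ^ ((3:ℝ)/2)))
    (hφlb : ∀ z ∈ Set.Ioi (0:ℝ), -C + α * z ^ l ≤ φ z)
    (hφub : ∀ z ∈ Set.Ioi (0:ℝ), φ z ≤ C * (1 + z ^ l))
    (f : EuclideanSpace ℝ (Fin 3) → EuclideanSpace ℝ (Fin 3))
    (hf : ∀ u : EuclideanSpace ℝ (Fin 3), u ≠ 0 → f u = φ (‖u‖ ^ 2) • u)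
    (hf0 : f 0 = 0) :
    ∃ C' : ℝ, 0 < C' ∧ ∀ a b : EuclideanSpace ℝ (Fin 3),
      ‖f a - f b‖ ≤ C' * (1 + ‖a‖ ^ 4 + ‖b‖ ^ 4) * ‖a - b‖ := by
  refine ⟨2 * C + 4 * (C + C₁), by positivity, ?_⟩
  have key : ∀ a b : EuclideanSpace ℝ (Fin 3), ‖b‖ ≤ ‖a‖ →
      ‖f a - f b‖ ≤ (2 * C + 4 * (C + C₁)) * (1 + ‖a‖ ^ 4 + ‖b‖ ^ 4) * ‖a - b‖ := by
    intro a b hab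
    rcases eq_or_ne a 0 with rfl | ha
    · have hb : b = 0 := by simpa using hab
      simp [hb]
    have hr : 0 < ‖a‖ := norm_pos_iff.2 ha
    have hg := abs_comp_sq_le hl hα hC hφlb hφub hr
    have hd0 := norm_nonneg (a - b)
    have h4 : 0 ≤ ‖b‖ ^ 4 := by positivity
    have h4' : 0 ≤ ‖a‖ ^ 4 := by positivity
    have hA : ‖φ (‖a‖ ^ 2) • (a - b)‖ ≤ C * (2 + ‖a‖ ^ 4) * ‖a - b‖ := by
      rw [norm_smul, Real.norm_eq_abs]
      gcongr
    have hB : ‖f a - f b‖ ≤ C * (2 + ‖a‖ ^ 4) * ‖a - b‖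
        + 2 * (C + C₁) * (1 + 2 * ‖a‖ ^ 4) * ‖a - b‖ := by
      rcases eq_or_ne b 0 with rfl | hb
      · have : 0 ≤ 2 * (C + C₁) * (1 + 2 * ‖a‖ ^ 4) * ‖a - 0‖ := by positivity
        rw [hf a ha, hf0, sub_zero]
        rw [sub_zero] at hA this ⊢
        linarith
      · have hs : 0 < ‖b‖ := norm_pos_iff.2 hb
        have hL := abs_comp_sq_sub_le hK hC hC₁ hderiv hφ'lb hφ'ub hs hab
        have hsub := norm_sub_norm_le a b
        have e : f a - f b = φ (‖a‖ ^ 2) • (a - b) + (φ (‖a‖ ^ 2) - φ (‖b‖ ^ 2)) • b := by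
          rw [hf a ha, hf b hb, smul_sub, sub_smul]; abel
        have hr4 : (1 + ‖a‖ ^ 3) * ‖a‖ ≤ 1 + 2 * ‖a‖ ^ 4 := by
          nlinarith [sq_nonneg (‖a‖ ^ 2 - 1 / 2), sq_nonneg (‖a‖ - 1 / 2)]
        have hM : ‖(φ (‖a‖ ^ 2) - φ (‖b‖ ^ 2)) • b‖
            ≤ 2 * (C + C₁) * (1 + 2 * ‖a‖ ^ 4) * ‖a - b‖ := by
          rw [norm_smul, Real.norm_eq_abs]
          calc |φ (‖a‖ ^ 2) - φ (‖b‖ ^ 2)| * ‖b‖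
              ≤ (2 * (C + C₁) * (1 + ‖a‖ ^ 3) * ‖a - b‖) * ‖a‖ := by
                refine mul_le_mul (hL.trans ?_) hab hs.le (by positivity)
                gcongr
            _ = 2 * (C + C₁) * ((1 + ‖a‖ ^ 3) * ‖a‖) * ‖a - b‖ := by ring
            _ ≤ _ := by gcongr
        rw [e]
        exact (norm_add_le _ _).trans (add_le_add hA hM)
    refine hB.trans ?_
    rw [← add_mul]
    refine mul_le_mul_of_nonneg_right ?_ hd0
    have p1 := mul_nonneg hC.le h4
    have p2 := mul_nonneg hC₁.le h4
    have p3 := mul_nonneg hC.le h4'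
    nlinarith
  intro a b
  rcases le_total ‖b‖ ‖a‖ with h | h
  · exact key a b h
  · have := key b a h
    rw [norm_sub_rev (f a), norm_sub_rev a, add_right_comm]
    exact this
end

section
/- Assume in addition that φ(z) → 0 as z → 0⁺ (i.e. f′(0) = 0). Then there exists a constant C′ > 0, depending only on φ and l, such that |f(a) − f(b)| ≤ C′ (|a| + |b|)(1 + |a|³ + |b|³) |a − b| for all a, b ∈ ℝ³. (This refined pointwise Lipschitz estimate, which gains a factor vanishing at the origin, is the pointwise content of the refined difference estimate used in the proof of the dissipative bound for the smooth part (r, w) of the solution.) -/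
/-!
Put `g s = φ (s²)` for `s > 0` and `g 0 = 0`; then `f u = g ‖u‖ • u` for every `u`. The two bounds on
`φ'` give `|φ' (s²)| ≤ (C + C₁) s⁻¹ (1 + s³)`, so `|g' s| = |2 s φ' (s²)| ≤ 2 (C + C₁) (1 + s³)`: the
singularity of `φ'` at the origin cancels. Since `φ → 0` at `0⁺`, `g` is continuous on `[0, ∞)`, and
the mean value theorem yields a Lipschitz bound for `g` that is valid up to the origin
(`abs_sub_le_of_profile`); its case `s = 0` bounds `g` itself by a multiple of `s (1 + s³)`.
The estimate follows from `f a - f b = g ‖a‖ • (a - b) + (g ‖a‖ - g ‖b‖) • b`.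
-/

open scoped RealInnerProductSpace

/-- The radial profile `s ↦ φ (s²)` of the nonlinearity, with the value `0` at the origin. -/
noncomputable def radialProfile (φ : ℝ → ℝ) : ℝ → ℝ :=
  Function.update (fun s => φ (s ^ 2)) 0 0

lemma radialProfile_zero (φ : ℝ → ℝ) : radialProfile φ 0 = 0 := by
  simp [radialProfile]

lemma radialProfile_of_ne (φ : ℝ → ℝ) {s : ℝ} (hs : s ≠ 0) : radialProfile φ s = φ (s ^ 2) := by
  simp [radialProfile, hs]

lemma radialProfile_hasDerivAt {φ φ' : ℝ → ℝ}
    (hderiv : ∀ z ∈ Set.Ioi (0:ℝ), HasDerivAt φ (φ' z) z) {s : ℝ} (hs : 0 < s) :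
    HasDerivAt (radialProfile φ) (φ' (s ^ 2) * (2 * s)) s := by
  have h1 : HasDerivAt (fun s : ℝ => φ (s ^ 2)) (φ' (s ^ 2) * (2 * s)) s := by
    have h2 : HasDerivAt (fun s : ℝ => s ^ 2) (2 * s) s := by
      simpa using hasDerivAt_pow 2 s
    exact (hderiv (s ^ 2) (by simp only [Set.mem_Ioi]; positivity)).comp s h2
  refine h1.congr_of_eventuallyEq ?_
  filter_upwards [lt_mem_nhds hs] with x hx
  exact radialProfile_of_ne φ hx.ne'

lemma radialProfile_continuousOn {φ φ' : ℝ → ℝ}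
    (hderiv : ∀ z ∈ Set.Ioi (0:ℝ), HasDerivAt φ (φ' z) z)
    (hφ0 : Filter.Tendsto φ (nhdsWithin 0 (Set.Ioi 0)) (nhds 0)) :
    ContinuousOn (radialProfile φ) (Set.Ici 0) := by
  intro s hs
  rcases (Set.mem_Ici.1 hs).eq_or_lt with rfl | hs
  · rw [radialProfile, continuousWithinAt_update_same, Set.Ici_sdiff_left]
    refine hφ0.comp (tendsto_nhdsWithin_iff.2 ⟨?_, ?_⟩)
    · have : Filter.Tendsto (fun s : ℝ => s ^ 2) (nhds 0) (nhds 0) := by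
        simpa using (continuous_pow 2).tendsto (0:ℝ)
      exact this.mono_left nhdsWithin_le_nhds
    · filter_upwards [self_mem_nhdsWithin] with x hx
      exact pow_pos (Set.mem_Ioi.1 hx) 2
  · exact (radialProfile_hasDerivAt hderiv hs).continuousAt.continuousWithinAt

/-- The two-sided bound on `φ'` makes the derivative of the profile grow at most like `1 + s³`,
with no singularity at the origin. -/
lemma abs_radial_deriv_le {φ' : ℝ → ℝ} {K C C₁ : ℝ} (hK : 0 < K) (hC : 0 < C) (hC₁ : 0 < C₁)
    (hlb : ∀ z ∈ Set.Ioi (0:ℝ), K - C * z ^ (-(1:ℝ)/2) ≤ φ' z)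
    (hub : ∀ z ∈ Set.Ioi (0:ℝ), φ' z ≤ C₁ * z ^ (-(1:ℝ)/2) * (1 + z ^ ((3:ℝ)/2)))
    {s : ℝ} (hs : 0 < s) :
    |φ' (s ^ 2) * (2 * s)| ≤ 2 * (C + C₁) * (1 + s ^ 3) := by
  have hz : s ^ 2 ∈ Set.Ioi (0:ℝ) := pow_pos hs 2
  have e1 : (s ^ 2) ^ (-(1:ℝ)/2) = s⁻¹ := by
    rw [← Real.rpow_natCast_mul hs.le, ← Real.rpow_neg_one]
    norm_num
  have e2 : (s ^ 2) ^ ((3:ℝ)/2) = s ^ 3 := by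
    rw [← Real.rpow_natCast_mul hs.le, ← Real.rpow_natCast]
    norm_num
  have h1 := mul_le_mul_of_nonneg_right (hlb _ hz) (by positivity : 0 ≤ 2 * s)
  have h2 := mul_le_mul_of_nonneg_right (hub _ hz) (by positivity : 0 ≤ 2 * s)
  rw [e1] at h1 h2
  rw [e2] at h2
  have e3 : (K - C * s⁻¹) * (2 * s) = 2 * (K * s) - 2 * C := by field_simp
  have e4 : C₁ * s⁻¹ * (1 + s ^ 3) * (2 * s) = 2 * C₁ * (1 + s ^ 3) := by field_simp
  rw [e3] at h1
  rw [e4] at h2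
  have p1 : 0 < K * s := by positivity
  have p2 : 0 < C * s ^ 3 := by positivity
  have p3 : 0 < C₁ * s ^ 3 := by positivity
  rw [abs_le]
  constructor <;> nlinarith

/-- Mean value estimate on `[0, ∞)` for a function whose derivative is only controlled on the open
half-line. -/
lemma abs_sub_le_of_profile {g g' : ℝ → ℝ} {M : ℝ} (hM : 0 ≤ M)
    (hcont : ContinuousOn g (Set.Ici 0)) (hg : ∀ s, 0 < s → HasDerivAt g (g' s) s)
    (hg' : ∀ s, 0 < s → |g' s| ≤ M * (1 + s ^ 3)) {s t : ℝ} (hs : 0 ≤ s) (ht : 0 ≤ t) :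
    |g t - g s| ≤ M * (1 + t ^ 3 + s ^ 3) * |t - s| := by
  wlog hst : s ≤ t generalizing s t
  · have := this ht hs (le_of_not_ge hst)
    rw [abs_sub_comm (g t), abs_sub_comm t]
    linarith
  rcases hst.eq_or_lt with rfl | hlt
  · simp
  obtain ⟨c, hc, hceq⟩ := exists_hasDerivAt_eq_slope g g' hlt
    (hcont.mono fun x hx => hs.trans hx.1) (fun x hx => hg x (hs.trans_lt hx.1))
  have hc0 : 0 < c := hs.trans_lt hc.1
  rw [eq_div_iff (sub_pos.2 hlt).ne'] at hceq
  rw [← hceq, abs_mul]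
  refine mul_le_mul_of_nonneg_right ((hg' c hc0).trans ?_) (abs_nonneg _)
  have h3 : c ^ 3 ≤ t ^ 3 := pow_le_pow_left₀ hc0.le hc.2.le 3
  have h4 : 0 ≤ s ^ 3 := by positivity
  exact mul_le_mul_of_nonneg_left (by linarith) hM

/-- Refined pointwise Lipschitz estimate under the extra assumption `φ(z) → 0` as
`z → 0⁺` (i.e. `f'(0) = 0`):
`|f(a) - f(b)| ≤ C'(|a| + |b|)(1 + |a|³ + |b|³)|a - b|` for all `a, b ∈ ℝ³`. -/
theorem stmt_5
    (l : ℝ) (hl : l ∈ Set.Ioc (0:ℝ) 2)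
    (φ φ' : ℝ → ℝ)
    (hderiv : ∀ z ∈ Set.Ioi (0:ℝ), HasDerivAt φ (φ' z) z)
    (hφ'cont : ContinuousOn φ' (Set.Ioi 0))
    (α K C C₁ : ℝ) (hα : 0 < α) (hK : 0 < K) (hC : 0 < C) (hC₁ : 0 < C₁)
    (hφ'lb : ∀ z ∈ Set.Ioi (0:ℝ), K - C * z ^ (-(1:ℝ)/2) ≤ φ' z)
    (hφ'ub : ∀ z ∈ Set.Ioi (0:ℝ), φ' z ≤ C₁ * z ^ (-(1:ℝ)/2) * (1 + z ^ ((3:ℝ)/2)))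
    (hφlb : ∀ z ∈ Set.Ioi (0:ℝ), -C + α * z ^ l ≤ φ z)
    (hφub : ∀ z ∈ Set.Ioi (0:ℝ), φ z ≤ C * (1 + z ^ l))
    (f : EuclideanSpace ℝ (Fin 3) → EuclideanSpace ℝ (Fin 3))
    (hf : ∀ u : EuclideanSpace ℝ (Fin 3), u ≠ 0 → f u = φ (‖u‖ ^ 2) • u)
    (hf0 : f 0 = 0)
    (hφ0 : Filter.Tendsto φ (nhdsWithin 0 (Set.Ioi 0)) (nhds 0)) :
    ∃ C' : ℝ, 0 < C' ∧ ∀ a b : EuclideanSpace ℝ (Fin 3),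
      ‖f a - f b‖ ≤ C' * (‖a‖ + ‖b‖) * (1 + ‖a‖ ^ 3 + ‖b‖ ^ 3) * ‖a - b‖ := by
  have hM : 0 < 2 * (C + C₁) := by positivity
  have key : ∀ s t : ℝ, 0 ≤ s → 0 ≤ t → |radialProfile φ t - radialProfile φ s| ≤
      2 * (C + C₁) * (1 + t ^ 3 + s ^ 3) * |t - s| := fun s t hs ht =>
    abs_sub_le_of_profile (g' := fun s => φ' (s ^ 2) * (2 * s)) hM.le
      (radialProfile_continuousOn hderiv hφ0) (fun _ h => radialProfile_hasDerivAt hderiv h)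
      (fun _ h => abs_radial_deriv_le hK hC hC₁ hφ'lb hφ'ub h) hs ht
  have hfg : ∀ u, f u = radialProfile φ ‖u‖ • u := by
    intro u
    by_cases hu : u = 0
    · simp [hu, hf0]
    · rw [hf u hu, radialProfile_of_ne φ (norm_ne_zero_iff.2 hu)]
  refine ⟨2 * (C + C₁), hM, fun a b => ?_⟩
  set M := 2 * (C + C₁)
  have hdecomp : f a - f b = radialProfile φ ‖a‖ • (a - b) +
      (radialProfile φ ‖a‖ - radialProfile φ ‖b‖) • b := by
    rw [hfg a, hfg b, smul_sub, sub_smul]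
    abel
  have h1 : |radialProfile φ ‖a‖| ≤ M * (1 + ‖a‖ ^ 3 + ‖b‖ ^ 3) * ‖a‖ := by
    have h := key 0 ‖a‖ le_rfl (norm_nonneg a)
    rw [radialProfile_zero, sub_zero, sub_zero, abs_norm] at h
    refine h.trans ?_
    gcongr
    exact norm_nonneg b
  have h2 : |radialProfile φ ‖a‖ - radialProfile φ ‖b‖| ≤
      M * (1 + ‖a‖ ^ 3 + ‖b‖ ^ 3) * ‖a - b‖ := by
    refine (key ‖b‖ ‖a‖ (norm_nonneg b) (norm_nonneg a)).trans ?_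
    gcongr
    exact abs_norm_sub_norm_le a b
  calc ‖f a - f b‖ ≤ |radialProfile φ ‖a‖| * ‖a - b‖ +
        |radialProfile φ ‖a‖ - radialProfile φ ‖b‖| * ‖b‖ := by
        rw [hdecomp]
        refine (norm_add_le _ _).trans_eq ?_
        rw [norm_smul, norm_smul, Real.norm_eq_abs, Real.norm_eq_abs]
    _ ≤ M * (1 + ‖a‖ ^ 3 + ‖b‖ ^ 3) * ‖a‖ * ‖a - b‖ +
        M * (1 + ‖a‖ ^ 3 + ‖b‖ ^ 3) * ‖a - b‖ * ‖b‖ := by gcongr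
    _ = M * (‖a‖ + ‖b‖) * (1 + ‖a‖ ^ 3 + ‖b‖ ^ 3) * ‖a - b‖ := by ring
end

section
/- Assume in addition that l > 1. Then there exist constants κ > 0 and L ≥ 0, depending only on φ and l, such that (f(a) − f(b))·(a − b) ≥ κ ( |a|^{1+l} + |b|^{1+l} ) |a − b|² − L |a − b|² for all a, b ∈ ℝ³. (This strong monotonicity of the super-cubic Forchheimer nonlinearity is what allows the Navier–Stokes inertial term B(u,u) to be absorbed in the uniqueness and smoothing proofs for the Navier–Stokes–Brinkman–Forchheimer equation.) -/
open scoped RealInnerProductSpace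

/-!
Writing `p = φ(|a|²)` and `q = φ(|b|²)`, polarization gives
`(p a - q b)·(a - b) = (p + q)/2 |a - b|² + (p - q)(|a|² - |b|²)/2`.
The lower bound on `φ'` makes `s ↦ φ(s²) + 2Cs` nondecreasing
(`monotoneOn_sq_add_linear`), so the last term is at least `-C(|a| + |b|)|a - b|²`. The lower bound
on `φ` turns the first term into `(α/2)(|a|^{2l} + |b|^{2l})|a - b|²` up to a constant multiple of
`|a - b|²`. Since `2l > 1 + l > 1`, the power `2l` absorbs both the linear loss and
`|a|^{1+l} + |b|^{1+l}` (`exists_rpow_absorb`); one may even take `κ = 1`.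
-/

/-- The power `x^{2l}` dominates `x^{1+l}` and `x`, up to an additive constant. -/
lemma exists_rpow_absorb {l β C : ℝ} (hl1 : 1 < l) (hβ : 0 < β) (hC : 0 < C) :
    ∃ M : ℝ, 0 ≤ M ∧ ∀ x : ℝ, 0 ≤ x →
      x ^ ((1:ℝ) + l) - M ≤ β * (x ^ 2) ^ l - C * x := by
  have hl0 : 0 < l - 1 := by linarith
  -- `x ≥ N` is equivalent to `1 + C ≤ β x^{l-1}`.
  set N : ℝ := ((1 + C) / β) ^ (l - 1)⁻¹ with hN
  have hN0 : 0 ≤ N := by positivity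
  refine ⟨(1 + C) * N ^ ((1:ℝ) + l) + C, by positivity, fun x hx => ?_⟩
  have hE : 0 ≤ x ^ ((1:ℝ) + l) := by positivity
  have hNE : 0 ≤ N ^ ((1:ℝ) + l) := by positivity
  have hlin : x ≤ 1 + x ^ ((1:ℝ) + l) := by
    rcases le_total x 1 with h | h
    · linarith
    · have := Real.rpow_le_rpow_of_exponent_le h (show (1:ℝ) ≤ 1 + l by linarith)
      rw [Real.rpow_one] at this
      linarith
  have hlinC := mul_le_mul_of_nonneg_left hlin hC.le
  have h2 : 0 ≤ β * (x ^ 2) ^ l := by positivity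
  rcases le_total x N with h | h
  · have := Real.rpow_le_rpow hx h (show (0:ℝ) ≤ 1 + l by linarith)
    have := mul_le_mul_of_nonneg_left this (show 0 ≤ 1 + C by linarith)
    linarith
  · have hpow : (1 + C) / β ≤ x ^ (l - 1) := by
      have := Real.rpow_le_rpow hN0 h hl0.le
      rwa [hN, Real.rpow_inv_rpow (by positivity) hl0.ne'] at this
    have hsplit : (x ^ 2) ^ l = x ^ ((1:ℝ) + l) * x ^ (l - 1) := by
      rw [← Real.rpow_natCast x 2, ← Real.rpow_mul hx,
        ← Real.rpow_add_of_nonneg hx (by linarith) hl0.le]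
      congr 1
      push_cast
      ring
    rw [div_le_iff₀ hβ] at hpow
    have := mul_le_mul_of_nonneg_left hpow hE
    have : 0 ≤ (1 + C) * N ^ ((1:ℝ) + l) := by positivity
    rw [hsplit]
    linarith

lemma monotoneOn_sq_add_linear {φ φ' : ℝ → ℝ} {K C : ℝ} (hK : 0 < K)
    (hderiv : ∀ z ∈ Set.Ioi (0:ℝ), HasDerivAt φ (φ' z) z)
    (hφ'lb : ∀ z ∈ Set.Ioi (0:ℝ), K - C * z ^ (-(1:ℝ)/2) ≤ φ' z) :
    MonotoneOn (fun s : ℝ => φ (s ^ 2) + 2 * C * s) (Set.Ioi 0) := by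
  have hd : ∀ s ∈ Set.Ioi (0:ℝ), HasDerivAt (fun s : ℝ => φ (s ^ 2) + 2 * C * s)
      (φ' (s ^ 2) * (2 * s) + 2 * C) s := by
    intro s hs
    have hs2 : s ^ 2 ∈ Set.Ioi (0:ℝ) := pow_pos (Set.mem_Ioi.1 hs) 2
    have h1 : HasDerivAt (fun s : ℝ => s ^ 2) (2 * s) s := by
      simpa using hasDerivAt_pow 2 s
    have h2 : HasDerivAt (fun s : ℝ => 2 * C * s) (2 * C) s := by
      simpa using (hasDerivAt_id s).const_mul (2 * C)
    have h3 : HasDerivAt (fun s : ℝ => φ (s ^ 2)) (φ' (s ^ 2) * (2 * s)) s :=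
      HasDerivAt.comp (h₂ := φ) (h := fun s : ℝ => s ^ 2) s (hderiv (s ^ 2) hs2) h1
    exact h3.add h2
  refine monotoneOn_of_deriv_nonneg (convex_Ioi 0)
    (fun s hs => (hd s hs).continuousAt.continuousWithinAt) ?_ ?_
  · rw [interior_Ioi]
    exact fun s hs => (hd s hs).differentiableAt.differentiableWithinAt
  · rw [interior_Ioi]
    intro s hs
    rw [(hd s hs).deriv]
    have hs0 : 0 < s := hs
    have hlb := hφ'lb (s ^ 2) (pow_pos hs0 2)
    have hinv : (s ^ 2) ^ (-(1:ℝ)/2) = s⁻¹ := by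
      rw [← Real.rpow_natCast s 2, ← Real.rpow_mul hs0.le, ← Real.rpow_neg_one]
      norm_num
    rw [hinv] at hlb
    have := mul_le_mul_of_nonneg_right hlb (show 0 ≤ 2 * s by linarith)
    have hcancel : (K - C * s⁻¹) * (2 * s) = 2 * K * s - 2 * C := by
      field_simp
    have : 0 ≤ 2 * K * s := by positivity
    linarith

/-- Polarization identity for the difference of two radial rescalings. -/
lemma inner_smul_sub_smul {E : Type*} [NormedAddCommGroup E] [InnerProductSpace ℝ E]
    (p q : ℝ) (a b : E) :
    ⟪p • a - q • b, a - b⟫ =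
      (p + q) / 2 * ‖a - b‖ ^ 2 + (p - q) * (‖a‖ ^ 2 - ‖b‖ ^ 2) / 2 := by
  rw [norm_sub_sq_real, inner_sub_left, inner_sub_right, inner_sub_right, real_inner_smul_left,
    real_inner_smul_left, real_inner_smul_left, real_inner_smul_left, real_inner_self_eq_norm_sq,
    real_inner_self_eq_norm_sq, real_inner_comm a b]
  ring

/-- Strong monotonicity of the super-cubic (`l > 1`) Forchheimer nonlinearity:
`(f(a) - f(b))·(a - b) ≥ κ(|a|^{1+l} + |b|^{1+l})|a - b|² - L|a - b|²`. -/
theorem stmt_6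
    (l : ℝ) (hl : l ∈ Set.Ioc (0:ℝ) 2)
    (φ φ' : ℝ → ℝ)
    (hderiv : ∀ z ∈ Set.Ioi (0:ℝ), HasDerivAt φ (φ' z) z)
    (hφ'cont : ContinuousOn φ' (Set.Ioi 0))
    (α K C C₁ : ℝ) (hα : 0 < α) (hK : 0 < K) (hC : 0 < C) (hC₁ : 0 < C₁)
    (hφ'lb : ∀ z ∈ Set.Ioi (0:ℝ), K - C * z ^ (-(1:ℝ)/2) ≤ φ' z)
    (hφ'ub : ∀ z ∈ Set.Ioi (0:ℝ), φ' z ≤ C₁ * z ^ (-(1:ℝ)/2) * (1 + z ^ ((3:ℝ)/2)))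
    (hφlb : ∀ z ∈ Set.Ioi (0:ℝ), -C + α * z ^ l ≤ φ z)
    (hφub : ∀ z ∈ Set.Ioi (0:ℝ), φ z ≤ C * (1 + z ^ l))
    (f : EuclideanSpace ℝ (Fin 3) → EuclideanSpace ℝ (Fin 3))
    (hf : ∀ u : EuclideanSpace ℝ (Fin 3), u ≠ 0 → f u = φ (‖u‖ ^ 2) • u)
    (hf0 : f 0 = 0)
    (hl1 : 1 < l) :
    ∃ κ : ℝ, 0 < κ ∧ ∃ L : ℝ, 0 ≤ L ∧ ∀ a b : EuclideanSpace ℝ (Fin 3),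
      ⟪f a - f b, a - b⟫ ≥
        κ * (‖a‖ ^ ((1:ℝ)+l) + ‖b‖ ^ ((1:ℝ)+l)) * ‖a - b‖ ^ 2 - L * ‖a - b‖ ^ 2 := by
  obtain ⟨M, hM0, hM⟩ := exists_rpow_absorb (β := α / 2) hl1 (by positivity) hC
  refine ⟨1, one_pos, 2 * M + C, by positivity, fun a b => ?_⟩
  -- It suffices to reach the bound in which the losses have not yet been absorbed.
  suffices h : (-C + α / 2 * ((‖a‖ ^ 2) ^ l + (‖b‖ ^ 2) ^ l) - C * (‖a‖ + ‖b‖)) * ‖a - b‖ ^ 2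
      ≤ ⟪f a - f b, a - b⟫ by
    have h1 := hM ‖a‖ (norm_nonneg a)
    have h2 := hM ‖b‖ (norm_nonneg b)
    have := mul_le_mul_of_nonneg_right
      (show 1 * (‖a‖ ^ ((1:ℝ)+l) + ‖b‖ ^ ((1:ℝ)+l)) - (2 * M + C) ≤
        -C + α / 2 * ((‖a‖ ^ 2) ^ l + (‖b‖ ^ 2) ^ l) - C * (‖a‖ + ‖b‖) by linarith)
      (sq_nonneg ‖a - b‖)
    linarith
  have hl0 : l ≠ 0 := by linarith
  -- The value `φ 0` is unconstrained, so the case of a zero argument is separate.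
  have hzero : ∀ u : EuclideanSpace ℝ (Fin 3),
      (-C + α / 2 * (‖u‖ ^ 2) ^ l - C * ‖u‖) * ‖u‖ ^ 2 ≤ ⟪f u, u⟫ := by
    intro u
    rcases eq_or_ne u 0 with rfl | hu
    · simp
    · rw [hf u hu, real_inner_smul_left, real_inner_self_eq_norm_sq]
      have hu2 : 0 < ‖u‖ ^ 2 := pow_pos (norm_pos_iff.2 hu) 2
      have h1 := hφlb _ hu2
      have h2 : 0 ≤ α / 2 * (‖u‖ ^ 2) ^ l := by positivity
      have h3 : 0 ≤ C * ‖u‖ := by positivity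
      exact mul_le_mul_of_nonneg_right (by linarith) hu2.le
  rcases eq_or_ne a 0 with rfl | ha
  · simpa [hf0, Real.zero_rpow hl0] using hzero b
  rcases eq_or_ne b 0 with rfl | hb
  · simpa [hf0, Real.zero_rpow hl0] using hzero a
  have hr : 0 < ‖a‖ := norm_pos_iff.2 ha
  have hs : 0 < ‖b‖ := norm_pos_iff.2 hb
  rw [hf a ha, hf b hb, inner_smul_sub_smul]
  have hp := hφlb _ (show ‖a‖ ^ 2 ∈ Set.Ioi (0:ℝ) from pow_pos hr 2)
  have hq := hφlb _ (show ‖b‖ ^ 2 ∈ Set.Ioi (0:ℝ) from pow_pos hs 2)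
  have hmono := monotoneOn_sq_add_linear hK hderiv hφ'lb
  have hcross : -(2 * C) * (‖a‖ - ‖b‖) ^ 2 ≤
      (φ (‖a‖ ^ 2) - φ (‖b‖ ^ 2)) * (‖a‖ - ‖b‖) := by
    rcases le_total ‖a‖ ‖b‖ with h | h
    · have := hmono (Set.mem_Ioi.2 hr) (Set.mem_Ioi.2 hs) h
      simp only at this
      nlinarith
    · have := hmono (Set.mem_Ioi.2 hs) (Set.mem_Ioi.2 hr) h
      simp only at this
      nlinarith
  have htri : (‖a‖ - ‖b‖) ^ 2 ≤ ‖a - b‖ ^ 2 :=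
    sq_le_sq.2 (by simpa using abs_norm_sub_norm_le a b)
  have h1 := mul_le_mul_of_nonneg_right hcross (show 0 ≤ (‖a‖ + ‖b‖) / 2 by positivity)
  have h2 := mul_le_mul_of_nonneg_left htri (show 0 ≤ C * (‖a‖ + ‖b‖) by positivity)
  have h3 := mul_le_mul_of_nonneg_right
    (show -C + α / 2 * ((‖a‖ ^ 2) ^ l + (‖b‖ ^ 2) ^ l) ≤
      (φ (‖a‖ ^ 2) + φ (‖b‖ ^ 2)) / 2 by linarith) (sq_nonneg ‖a - b‖)
  linarith
end

section
/- Gronwall lemma with a parameter: Let ε₀ > 0 and C > 0, and let y : [0,∞) → [0,∞) be a differentiable function such that for every ε ∈ (0, ε₀] and every t ≥ 0 one has y′(t) + ε y(t) ≤ C ε⁶ y(t)³ + C. Then there exist a constant μ > 0, a constant C* > 0 and a monotone non-decreasing function Q : [0,∞) → [0,∞), all depending only on ε₀ and C, such that y(t) ≤ Q(y(0)) e^{−μ t} + C* for all t ≥ 0. (This is the parametric Gronwall argument applied to the energy functional 𝓔_ε(u,p) to deduce the basic dissipative estimate in the phase space E.) -/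
/-!
The parameter may be chosen pointwise in time. With `M = 2C + 1` and `ε = M / y(t)`, which is
admissible once `y(t) ≥ M / ε₀`, the inequality reads `y' ≤ -M + C + C M⁶ / y³`, and for
`y(t) ≥ M²` the right-hand side is at most `-1`. So `y` decreases at unit speed while it is
above a threshold `R = R(ε₀, C)` (`deriv_le_neg_one`). The barrier
`B(t) = R + log (1 + e^{y(0) - t})` satisfies `B ≥ R`, `B(0) ≥ y(0)` and `B' > -1`, so `y` cannot
cross it, and `B(t) ≤ R + e^{y(0)} e^{-t}`. Hence `μ = 1`, `Q = exp` and `C* = R` work.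
-/

/-- Optimising the parameter: if the differential inequality holds with value `z ≥ R` and slope `d`
for every admissible `ε`, then `d ≤ -1`. -/
lemma deriv_le_neg_one {ε₀ C z d : ℝ} (hε₀ : 0 < ε₀) (hC : 0 < C)
    (hz : (2 * C + 1) ^ 2 + (2 * C + 1) / ε₀ ≤ z)
    (h : ∀ ε ∈ Set.Ioc (0 : ℝ) ε₀, d + ε * z ≤ C * ε ^ 6 * z ^ 3 + C) : d ≤ -1 := by
  set M := 2 * C + 1 with hM
  have hM0 : 0 < M := by positivity
  have hdiv : 0 < M / ε₀ := by positivity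
  have hz1 : M ^ 2 ≤ z := by linarith
  have hz2 : M / ε₀ ≤ z := by linarith [sq_nonneg M]
  have hz0 : 0 < z := hdiv.trans_le hz2
  have hle : M / z ≤ ε₀ := by
    rw [div_le_iff₀ hε₀] at hz2
    rw [div_le_iff₀ hz0]
    linarith
  have key := h (M / z) ⟨by positivity, hle⟩
  rw [div_mul_cancel₀ M hz0.ne'] at key
  have hcube : (M / z) ^ 6 * z ^ 3 = (M ^ 2 / z) ^ 3 := by
    field_simp
  have hone : (M ^ 2 / z) ^ 3 ≤ 1 :=
    pow_le_one₀ (by positivity) ((div_le_one hz0).2 hz1)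
  rw [mul_assoc, hcube] at key
  have := mul_le_mul_of_nonneg_left hone hC.le
  linarith

/-- Gronwall lemma with a parameter: if a nonnegative differentiable function `y`
satisfies `y'(t) + ε y(t) ≤ C ε⁶ y(t)³ + C` for all `t ≥ 0` and all `ε ∈ (0, ε₀]`,
then `y(t) ≤ Q(y(0)) e^{-μ t} + C*` for some `μ > 0`, `C* > 0` and a monotone
non-decreasing nonnegative function `Q`, all depending only on `ε₀` and `C`. -/
theorem stmt_12 (ε₀ C : ℝ) (hε₀ : 0 < ε₀) (hC : 0 < C) :
    ∃ μ : ℝ, 0 < μ ∧ ∃ Cs : ℝ, 0 < Cs ∧ ∃ Q : ℝ → ℝ,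
      Monotone Q ∧ (∀ s : ℝ, 0 ≤ Q s) ∧
      ∀ y y' : ℝ → ℝ,
        (∀ t : ℝ, 0 ≤ t → HasDerivAt y (y' t) t) →
        (∀ t : ℝ, 0 ≤ t → 0 ≤ y t) →
        (∀ ε ∈ Set.Ioc (0:ℝ) ε₀, ∀ t : ℝ, 0 ≤ t →
          y' t + ε * y t ≤ C * ε ^ 6 * (y t) ^ 3 + C) →
        ∀ t : ℝ, 0 ≤ t → y t ≤ Q (y 0) * Real.exp (-μ * t) + Cs := by
  set R := (2 * C + 1) ^ 2 + (2 * C + 1) / ε₀ with hR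
  refine ⟨1, one_pos, R, by positivity, Real.exp, Real.exp_monotone,
    fun s => (Real.exp_pos s).le, ?_⟩
  intro y y' hy _ hineq t ht
  have hpos : ∀ x : ℝ, 0 < 1 + Real.exp (y 0 - x) := fun x => by positivity
  have hbarrier : y t ≤ R + Real.log (1 + Real.exp (y 0 - t)) := by
    refine image_le_of_deriv_right_lt_deriv_boundary (a := 0) (b := t) (f := y) (f' := y')
      (B := fun x => R + Real.log (1 + Real.exp (y 0 - x)))
      (B' := fun x => (Real.exp (y 0 - x) * (-1)) / (1 + Real.exp (y 0 - x)))
      (fun x hx => (hy x hx.1).continuousAt.continuousWithinAt)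
      (fun x hx => (hy x hx.1).hasDerivWithinAt) ?_ ?_ ?_ ⟨ht, le_rfl⟩
    · have hlog : y 0 ≤ Real.log (1 + Real.exp (y 0 - 0)) := by
        rw [Real.le_log_iff_exp_le (hpos 0), sub_zero]
        linarith
      have : 0 ≤ R := by positivity
      show y 0 ≤ R + Real.log (1 + Real.exp (y 0 - 0))
      linarith
    · intro x
      exact ((((hasDerivAt_id x).const_sub (y 0)).exp.const_add 1).log (hpos x).ne').const_add R
    · intro x hx hxB
      have hlog : 0 ≤ Real.log (1 + Real.exp (y 0 - x)) :=
        Real.log_nonneg (by linarith [Real.exp_pos (y 0 - x)])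
      have hd : y' x ≤ -1 :=
        deriv_le_neg_one hε₀ hC (z := y x) (by rw [hxB]; linarith)
          (fun ε hε => hineq ε hε x hx.1)
      refine hd.trans_lt ?_
      rw [lt_div_iff₀ (hpos x)]
      linarith
  have hlog : Real.log (1 + Real.exp (y 0 - t)) ≤ Real.exp (y 0 - t) := by
    linarith [Real.log_le_sub_one_of_pos (hpos t)]
  have hexp : Real.exp (y 0) * Real.exp (-1 * t) = Real.exp (y 0 - t) := by
    rw [← Real.exp_add]
    ring_nf
  linarith
end

section
/- Transitivity of exponential attraction: Let (X, d) be a metric space and let S(t) : X → X, t ≥ 0, satisfy the semigroup property S(t+s) = S(t) ∘ S(s) and the uniform Lipschitz estimate d(S(t)x, S(t)y) ≤ C e^{K t} d(x, y) for all x, y ∈ X and t ≥ 0, with constants C ≥ 1, K ≥ 0. Let B₁, B₂, B₃ ⊆ X with B₂ nonempty, and suppose there are constants C₁, C₂ ≥ 0 and α₁, α₂ > 0 such that for all t ≥ 0: sup_{x ∈ B₁} dist(S(t)x, B₂) ≤ C₁ e^{−α₁ t} and sup_{x ∈ B₂} dist(S(t)x, B₃) ≤ C₂ e^{−α₂ t},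 where dist(x, A) = inf_{a ∈ A} d(x, a). Then for all t ≥ 0: sup_{x ∈ B₁} dist(S(t)x, B₃) ≤ C′ e^{−α′ t}, where C′ = C C₁ + C₂ and α′ = α₁ α₂ / (K + α₁ + α₂). -/
/-!
Write `D = K + α₁ + α₂` and split `t = a + b` with `a = α₁ t / D`, `b = (K + α₂) t / D`. Following
the flow for time `b` brings `x` within `C₁ e^{-α₁ b}` of `B₂`; the remaining time `a` expands
this error by at most `C e^{K a}`, while points of `B₂` come within `C₂ e^{-α₂ a}` of `B₃`.
This choice of `a` equates the exponents: `K a - α₁ b = -α₂ a = -(α₁ α₂ / D) t`.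
-/

/-- Transitivity of exponential attraction: if the semigroup `S` is uniformly
Lipschitz with constant `C e^{K t}`, `B₁` is attracted to `B₂` exponentially with
rate `α₁` and constant `C₁`, and `B₂` is attracted to `B₃` exponentially with rate
`α₂` and constant `C₂`, then `B₁` is attracted to `B₃` exponentially with constant
`C C₁ + C₂` and rate `α₁α₂/(K + α₁ + α₂)`. -/
theorem stmt_13 {X : Type*} [MetricSpace X]
    (S : ℝ → X → X)
    (hsem : ∀ t : ℝ, 0 ≤ t → ∀ s : ℝ, 0 ≤ s → S (t + s) = S t ∘ S s)
    (C K : ℝ) (hC : 1 ≤ C) (hK : 0 ≤ K)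
    (hlip : ∀ t : ℝ, 0 ≤ t → ∀ x y : X,
      dist (S t x) (S t y) ≤ C * Real.exp (K * t) * dist x y)
    (B₁ B₂ B₃ : Set X) (hB₂ : B₂.Nonempty)
    (C₁ C₂ : ℝ) (hC₁ : 0 ≤ C₁) (hC₂ : 0 ≤ C₂)
    (α₁ α₂ : ℝ) (hα₁ : 0 < α₁) (hα₂ : 0 < α₂)
    (h12 : ∀ t : ℝ, 0 ≤ t → ∀ x ∈ B₁,
      Metric.infDist (S t x) B₂ ≤ C₁ * Real.exp (-α₁ * t))
    (h23 : ∀ t : ℝ, 0 ≤ t → ∀ x ∈ B₂,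
      Metric.infDist (S t x) B₃ ≤ C₂ * Real.exp (-α₂ * t)) :
    ∀ t : ℝ, 0 ≤ t → ∀ x ∈ B₁,
      Metric.infDist (S t x) B₃ ≤
        (C * C₁ + C₂) * Real.exp (-(α₁ * α₂ / (K + α₁ + α₂)) * t) := by
  intro t ht x hx
  have hD : 0 < K + α₁ + α₂ := by positivity
  obtain ⟨a, ha⟩ : ∃ a, a = α₁ * t / (K + α₁ + α₂) := ⟨_, rfl⟩
  obtain ⟨b, hb⟩ : ∃ b, b = (K + α₂) * t / (K + α₁ + α₂) := ⟨_, rfl⟩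
  have ha0 : 0 ≤ a := by rw [ha]; positivity
  have hb0 : 0 ≤ b := by rw [hb]; positivity
  have hab : t = a + b := by rw [ha, hb]; field_simp; ring
  have e1 : K * a + -α₁ * b = -(α₁ * α₂ / (K + α₁ + α₂)) * t := by
    rw [ha, hb]; field_simp; ring
  have e2 : -α₂ * a = -(α₁ * α₂ / (K + α₁ + α₂)) * t := by
    rw [ha]; field_simp
  have hM : 0 < C * Real.exp (K * a) := by positivity
  have hS : S t x = S a (S b x) := by rw [hab, hsem a ha0 b hb0]; rfl
  -- The infimum over `B₂` need not be attained, so the bound is shown for every `y ∈ B₂`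
  -- and only then passed to the infimum.
  have key : (Metric.infDist (S t x) B₃ - C₂ * Real.exp (-α₂ * a)) / (C * Real.exp (K * a))
      ≤ Metric.infDist (S b x) B₂ := by
    rw [Metric.le_infDist hB₂]
    intro y hy
    rw [div_le_iff₀ hM, hS]
    have h1 := Metric.infDist_le_infDist_add_dist (s := B₃) (x := S a (S b x)) (y := S a y)
    have h2 := hlip a ha0 (S b x) y
    have h3 := h23 a ha0 y hy
    linarith
  have h := key.trans (h12 b hb0 x hx)
  rw [div_le_iff₀ hM, e2] at h
  have e3 : C₁ * Real.exp (-α₁ * b) * (C * Real.exp (K * a))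
      = C * C₁ * Real.exp (-(α₁ * α₂ / (K + α₁ + α₂)) * t) := by
    rw [← e1, Real.exp_add]; ring
  rw [e3] at h
  linarith
end
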